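/- arXiv:math/0407145 — 9 statements merged into one kernel-verified Lean document; each statement's English description precedes it below -/
import Mathlib

section
/- Let i, j, k be nonnegative integers with (i, j) ≠ (0, 0). There exists r ∈ (0,1) with F_{ijk}(r) = i·α(r) + j·β′(r) + k·π/3 = 2π if and only if 6i + 3j + 2k > 12 and i + j + k < 6. -/
/-- The angle `α′(r) = arccos(1/(1+r))`. -/
noncomputable def alpha' (r : ℝ) : ℝ := Real.arccos (1 / (1 + r))

/-- The angle `α(r) = π − 2α′(r)`. -/
noncomputable def alphaAngle (r : ℝ) : ℝ := Real.pi - 2 * alpha' r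

/-- The angle `β′(r) = arccos(r/(1+r))`. -/
noncomputable def beta' (r : ℝ) : ℝ := Real.arccos (r / (1 + r))

/-- The angle `β(r) = π − 2β′(r)`. -/
noncomputable def betaAngle (r : ℝ) : ℝ := Real.pi - 2 * beta' r

/-- `F_{ijk}(r) = i·α(r) + j·β′(r) + k·π/3`. -/
noncomputable def F (i j k : ℕ) (r : ℝ) : ℝ :=
  (i : ℝ) * alphaAngle r + (j : ℝ) * beta' r + (k : ℝ) * (Real.pi / 3)

theorem alphaAngle_strictAntiOn : StrictAntiOn alphaAngle (Set.Icc 0 1) := by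
  intro x hx y hy hxy
  have hx0 : 0 < 1 + x := by linarith [hx.1]
  have hy0 : 0 < 1 + y := by linarith [hy.1]
  have hlt : Real.arccos (1 / (1 + x)) < Real.arccos (1 / (1 + y)) := by
    refine Real.strictAntiOn_arccos ⟨?_, ?_⟩ ⟨?_, ?_⟩ ?_
    · exact le_trans (by norm_num) (one_div_pos.2 hy0).le
    · rw [div_le_one hy0]; linarith [hy.1]
    · exact le_trans (by norm_num) (one_div_pos.2 hx0).le
    · rw [div_le_one hx0]; linarith [hx.1]
    · exact one_div_lt_one_div_of_lt hx0 (by linarith)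
  unfold alphaAngle alpha'
  linarith

theorem beta'_strictAntiOn : StrictAntiOn beta' (Set.Icc 0 1) := by
  intro x hx y hy hxy
  have hx0 : 0 < 1 + x := by linarith [hx.1]
  have hy0 : 0 < 1 + y := by linarith [hy.1]
  refine Real.strictAntiOn_arccos ⟨?_, ?_⟩ ⟨?_, ?_⟩ ?_
  · exact le_trans (by norm_num) (div_nonneg hx.1 hx0.le)
  · rw [div_le_one hx0]; linarith
  · exact le_trans (by norm_num) (div_nonneg hy.1 hy0.le)
  · rw [div_le_one hy0]; linarith
  · rw [div_lt_div_iff₀ hx0 hy0]; linarith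

theorem F_strictAntiOn {i j : ℕ} (k : ℕ) (h : (i, j) ≠ (0, 0)) :
    StrictAntiOn (F i j k) (Set.Icc 0 1) := by
  intro x hx y hy hxy
  have ha := alphaAngle_strictAntiOn hx hy hxy
  have hb := beta'_strictAntiOn hx hy hxy
  have hi : (i : ℝ) * alphaAngle y ≤ i * alphaAngle x := by gcongr
  have hj : (j : ℝ) * beta' y ≤ j * beta' x := by gcongr
  unfold F
  rcases Nat.eq_zero_or_pos i with rfl | hi0
  · have hj0 : 0 < j := Nat.pos_of_ne_zero fun hj => h (by rw [hj])
    have : (j : ℝ) * beta' y < j * beta' x := by gcongr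
    linarith
  · have : (i : ℝ) * alphaAngle y < i * alphaAngle x := by gcongr
    linarith

theorem F_continuousOn (i j k : ℕ) : ContinuousOn (F i j k) (Set.Icc 0 1) := by
  have hne : ∀ x ∈ Set.Icc (0 : ℝ) 1, 1 + x ≠ 0 := fun x hx => by linarith [hx.1]
  have ha : ContinuousOn (fun x : ℝ => Real.arccos (1 / (1 + x))) (Set.Icc 0 1) :=
    Real.continuous_arccos.comp_continuousOn
      (continuousOn_const.div (by fun_prop) hne)
  have hb : ContinuousOn (fun x : ℝ => Real.arccos (x / (1 + x))) (Set.Icc 0 1) :=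
    Real.continuous_arccos.comp_continuousOn
      (continuousOn_id.div (by fun_prop) hne)
  unfold F alphaAngle alpha' beta'
  fun_prop

theorem F_zero (i j k : ℕ) :
    F i j k 0 = (6 * i + 3 * j + 2 * k : ℕ) * (Real.pi / 6) := by
  simp only [F, alphaAngle, alpha', beta', add_zero, div_one, Real.arccos_one, Real.arccos_zero]
  push_cast
  ring

theorem F_one (i j k : ℕ) : F i j k 1 = (i + j + k : ℕ) * (Real.pi / 3) := by
  have hhalf : Real.arccos (1 / (1 + 1)) = Real.pi / 3 := by
    rw [one_add_one_eq_two, ← Real.cos_pi_div_three]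
    exact Real.arccos_cos (by positivity) (by linarith [Real.pi_pos])
  simp only [F, alphaAngle, alpha', beta', hhalf]
  push_cast
  ring

theorem two_pi_lt_F_zero_iff (i j k : ℕ) :
    2 * Real.pi < F i j k 0 ↔ 12 < 6 * i + 3 * j + 2 * k := by
  rw [F_zero, show 2 * Real.pi = (12 : ℕ) * (Real.pi / 6) by push_cast; ring,
    mul_lt_mul_iff_left₀ (by positivity), Nat.cast_lt]

theorem F_one_lt_two_pi_iff (i j k : ℕ) :
    F i j k 1 < 2 * Real.pi ↔ i + j + k < 6 := by
  rw [F_one, show 2 * Real.pi = (6 : ℕ) * (Real.pi / 3) by push_cast; ring,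
    mul_lt_mul_iff_left₀ (by positivity), Nat.cast_lt]

/-- For nonnegative integers `i, j, k` with `(i, j) ≠ (0, 0)`, there is an
`r ∈ (0,1)` with `F_{ijk}(r) = 2π` if and only if `6i + 3j + 2k > 12` and
`i + j + k < 6`. -/
theorem exists_root_iff (i j k : ℕ) (h : (i, j) ≠ (0, 0)) :
    (∃ r ∈ Set.Ioo (0 : ℝ) 1, F i j k r = 2 * Real.pi) ↔
      12 < 6 * i + 3 * j + 2 * k ∧ i + j + k < 6 := by
  rw [← two_pi_lt_F_zero_iff, ← F_one_lt_two_pi_iff]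
  constructor
  · rintro ⟨r, hr, hF⟩
    have hr' := Set.Ioo_subset_Icc_self hr
    rw [← hF]
    exact ⟨F_strictAntiOn k h (Set.left_mem_Icc.2 zero_le_one) hr' hr.1,
      F_strictAntiOn k h hr' (Set.right_mem_Icc.2 zero_le_one) hr.2⟩
  · rintro ⟨h0, h1⟩
    exact intermediate_value_Ioo' zero_le_one (F_continuousOn i j k) ⟨h1, h0⟩
end

section
/- Let r₀ = (1 − sin(π/5))/sin(π/5). Then there are no nonnegative integers l, m, n with (l, m) ≠ (0, 0) such that l·α′(r₀) + m·β(r₀) + n·π/3 = 2π. (Hence the value r₀, the only candidate besides the nine listed values for which the small-disc angle equation is solvable, does not admit a compact packing.) -/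
open Real

lemma sin_pi_div_five_bounds : 0.587 < sin (π / 5) ∧ sin (π / 5) < 0.589 := by
  have hpos : 0 < sin (π / 5) := sin_pos_of_pos_of_lt_pi (by positivity) (by linarith [pi_pos])
  have hsq := sin_sq_add_cos_sq (π / 5)
  have h5 : √5 ^ 2 = 5 := sq_sqrt (by norm_num)
  have hlt : √5 < 2.2361 := (sqrt_lt' (by norm_num)).2 (by norm_num)
  have hgt : 2.236 < √5 := lt_sqrt_of_sq_lt (by norm_num)
  rw [cos_pi_div_five] at hsq
  constructor <;> nlinarith

lemma one_add_one_sub_div_self {s : ℝ} (hs : s ≠ 0) : 1 + (1 - s) / s = 1 / s := by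
  field_simp
  ring

lemma alpha'_r0 : alpha' ((1 - sin (π / 5)) / sin (π / 5)) = 3 * π / 10 := by
  have hs : sin (π / 5) ≠ 0 := by linarith [sin_pi_div_five_bounds.1]
  rw [alpha', one_add_one_sub_div_self hs, one_div_one_div, ← cos_pi_div_two_sub,
    arccos_cos (by linarith [pi_pos]) (by linarith [pi_pos])]
  ring

lemma betaAngle_r0 :
    betaAngle ((1 - sin (π / 5)) / sin (π / 5)) = 2 * arcsin (1 - sin (π / 5)) := by
  have hs : sin (π / 5) ≠ 0 := by linarith [sin_pi_div_five_bounds.1]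
  rw [betaAngle, beta', one_add_one_sub_div_self hs, div_div_div_cancel_right₀ hs, div_one,
    arccos_eq_pi_div_two_sub_arcsin]
  ring

lemma betaAngle_r0_bounds :
    8 * π / 30 < betaAngle ((1 - sin (π / 5)) / sin (π / 5)) ∧
      betaAngle ((1 - sin (π / 5)) / sin (π / 5)) < 41 / 5 * π / 30 := by
  obtain ⟨hs, hs'⟩ := sin_pi_div_five_bounds
  have hp := pi_gt_d4
  have hp' := pi_lt_d4
  rw [betaAngle_r0]
  constructor
  · have hx : 2 * π / 15 < arcsin (1 - sin (π / 5)) := by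
      rw [lt_arcsin_iff_sin_lt ⟨by linarith, by linarith⟩ ⟨by linarith, by linarith⟩]
      have hb := sin_bound (x := 2 * π / 15) (by rw [abs_of_pos (by positivity)]; linarith)
      rw [abs_of_pos (show 0 < 2 * π / 15 by positivity)] at hb
      have h1 : 0.4188 < 2 * π / 15 := by linarith
      have h2 : 2 * π / 15 < 0.4189 := by linarith
      have h3 : (0.4188 : ℝ) ^ 3 ≤ (2 * π / 15) ^ 3 := by gcongr
      have h5 : (2 * π / 15) ^ 5 ≤ 0.4189 ^ 5 := by gcongr
      norm_num at h3 h5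
      linarith [(abs_le.1 hb).2]
    linarith
  · have hx : arcsin (1 - sin (π / 5)) < 41 * π / 300 := by
      rw [arcsin_lt_iff_lt_sin ⟨by linarith, by linarith⟩ ⟨by linarith, by linarith⟩]
      have hb := sin_bound (x := 41 * π / 300) (by rw [abs_of_pos (by positivity)]; linarith)
      rw [abs_of_pos (show 0 < 41 * π / 300 by positivity)] at hb
      have h1 : 0.4293 < 41 * π / 300 := by linarith
      have h2 : 41 * π / 300 < 0.4294 := by linarith
      have h3 : (41 * π / 300) ^ 3 ≤ 0.4294 ^ 3 := by gcongr
      have h5 : (41 * π / 300) ^ 5 ≤ 0.4294 ^ 5 := by gcongr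
      norm_num at h3 h5
      linarith [(abs_le.1 hb).1]
    linarith

/-- For `r₀ = (1 − sin(π/5))/sin(π/5)` there is no nontrivial solution of
`l·α′(r₀) + m·β(r₀) + n·π/3 = 2π` in nonnegative integers. -/
theorem no_large_disc_equation_at_r0 :
    ¬ ∃ l m n : ℕ, (l, m) ≠ (0, 0) ∧
      (l : ℝ) * alpha' ((1 - Real.sin (Real.pi / 5)) / Real.sin (Real.pi / 5)) +
      (m : ℝ) * betaAngle ((1 - Real.sin (Real.pi / 5)) / Real.sin (Real.pi / 5)) +
      (n : ℝ) * (Real.pi / 3) = 2 * Real.pi := by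
  rintro ⟨l, m, n, hlm, h⟩
  obtain ⟨hb, hb'⟩ := betaAngle_r0_bounds
  rw [alpha'_r0] at h
  rcases Nat.eq_zero_or_pos m with rfl | hm
  · have h60 : (9 * l + 10 * n : ℝ) = 60 := by
      apply mul_right_cancel₀ pi_ne_zero
      push_cast at h
      linarith
    have h60' : 9 * l + 10 * n = 60 := by exact_mod_cast h60
    have : l ≠ 0 := fun hl => hlm (by rw [hl])
    omega
  · have hm' : (0 : ℝ) < m := by exact_mod_cast hm
    have hlow := mul_lt_mul_of_pos_left hb hm'
    have hupp := mul_lt_mul_of_pos_left hb' hm'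
    have h1 : (8 * m + 9 * l + 10 * n : ℝ) < 60 := by
      apply lt_of_mul_lt_mul_right _ pi_pos.le
      linarith
    have h2 : (300 : ℝ) < 41 * m + 45 * l + 50 * n := by
      apply lt_of_mul_lt_mul_right _ pi_pos.le
      linarith
    have h1' : 8 * m + 9 * l + 10 * n < 60 := by exact_mod_cast h1
    have h2' : 300 < 41 * m + 45 * l + 50 * n := by exact_mod_cast h2
    have hm7 : m ≤ 7 := by omega
    interval_cases m <;> omega
end

section
/- There exists a unique r ∈ (0,1) with 3·α(r) + 2·β′(r) = 2π, and this r satisfies r⁴ − 10r² − 8r + 9 = 0 (numerically r = c₁ ≈ 0.6375559772). -/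
/-- On `[0, ∞)` the left-hand side of the equation is strictly decreasing. -/
theorem strictAntiOn_three_alphaAngle_add_two_beta' :
    StrictAntiOn (fun r : ℝ => 3 * alphaAngle r + 2 * beta' r) (Set.Ici 0) := by
  intro x hx y hy hxy
  have hx0 : 0 ≤ x := hx
  have hy0 : 0 ≤ y := hy
  have halpha : alpha' x < alpha' y := by
    refine Real.strictAntiOn_arccos ⟨?_, ?_⟩ ⟨?_, ?_⟩ ?_
    · linarith [show 0 ≤ 1 / (1 + y) by positivity]
    · rw [div_le_one (by positivity)]; linarith
    · linarith [show 0 ≤ 1 / (1 + x) by positivity]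
    · rw [div_le_one (by positivity)]; linarith
    · exact one_div_lt_one_div_of_lt (by positivity) (by linarith)
  have hbeta : beta' y ≤ beta' x := by
    refine Real.antitone_arccos ?_
    rw [div_le_div_iff₀ (by positivity) (by positivity)]
    linarith
  simp only [alphaAngle]
  linarith

theorem continuousOn_three_alphaAngle_add_two_beta' :
    ContinuousOn (fun r : ℝ => 3 * alphaAngle r + 2 * beta' r) (Set.Ici 0) := by
  have hne : ∀ r ∈ Set.Ici (0 : ℝ), 1 + r ≠ 0 := fun r hr => by
    have hr0 : 0 ≤ r := hr
    positivity
  have halpha : ContinuousOn alpha' (Set.Ici 0) :=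
    Real.continuous_arccos.comp_continuousOn
      (continuousOn_const.div (continuousOn_const.add continuousOn_id) hne)
  have hbeta : ContinuousOn beta' (Set.Ici 0) :=
    Real.continuous_arccos.comp_continuousOn
      (continuousOn_id.div (continuousOn_const.add continuousOn_id) hne)
  unfold alphaAngle
  fun_prop

theorem three_alphaAngle_zero_add_two_beta' : 3 * alphaAngle 0 + 2 * beta' 0 = 4 * Real.pi := by
  simp [alphaAngle, alpha', beta']
  ring

theorem three_alphaAngle_one_add_two_beta' :
    3 * alphaAngle 1 + 2 * beta' 1 = 5 * Real.pi / 3 := by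
  have h : Real.arccos (1 / (1 + 1)) = Real.pi / 3 := by
    rw [one_add_one_eq_two, ← Real.cos_pi_div_three]
    exact Real.arccos_cos (by positivity) (by linarith [Real.pi_pos])
  simp only [alphaAngle, alpha', beta', h]
  ring

theorem quartic_of_three_alphaAngle_add_two_beta' {r : ℝ} (hr : 0 < r)
    (h : 3 * alphaAngle r + 2 * beta' r = 2 * Real.pi) :
    r ^ 4 - 10 * r ^ 2 - 8 * r + 9 = 0 := by
  have hs : 0 < 1 + r := by positivity
  have hca : Real.cos (alpha' r) = 1 / (1 + r) := by
    refine Real.cos_arccos ?_ ?_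
    · linarith [show 0 ≤ 1 / (1 + r) by positivity]
    · rw [div_le_one hs]; linarith
  have hcb : Real.cos (beta' r) = r / (1 + r) := by
    refine Real.cos_arccos ?_ ?_
    · linarith [show 0 ≤ r / (1 + r) by positivity]
    · rw [div_le_one hs]; linarith
  have hangle : 3 * alpha' r = beta' r + Real.pi / 2 := by
    unfold alphaAngle at h
    linarith
  have hcos : 4 * Real.cos (alpha' r) ^ 3 - 3 * Real.cos (alpha' r) = -Real.sin (beta' r) := by
    rw [← Real.cos_three_mul, hangle, Real.cos_add_pi_div_two]
  have hsq : (4 * (1 / (1 + r)) ^ 3 - 3 * (1 / (1 + r))) ^ 2 = 1 - (r / (1 + r)) ^ 2 := by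
    rw [← hca, ← hcb, hcos, neg_sq, Real.sin_sq]
  have hpoly : (4 - 3 * (1 + r) ^ 2) ^ 2 = (1 + r) ^ 4 * ((1 + r) ^ 2 - r ^ 2) := by
    have hl : (4 - 3 * (1 + r) ^ 2) ^ 2 =
        (1 + r) ^ 6 * (4 * (1 / (1 + r)) ^ 3 - 3 * (1 / (1 + r))) ^ 2 := by
      field_simp
    rw [hl, hsq]
    field_simp
  refine (mul_eq_zero.mp ?_).resolve_left hr.ne'
  linear_combination -hpoly / 2

/-- There is a unique `r ∈ (0,1)` with `3α(r) + 2β′(r) = 2π`, and it satisfies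
`r⁴ − 10r² − 8r + 9 = 0` (this is `c₁ ≈ 0.6375559772`). -/
theorem c1_equation :
    (∃! r : ℝ, r ∈ Set.Ioo (0 : ℝ) 1 ∧
      3 * alphaAngle r + 2 * beta' r = 2 * Real.pi) ∧
    ∀ r ∈ Set.Ioo (0 : ℝ) 1, 3 * alphaAngle r + 2 * beta' r = 2 * Real.pi →
      r ^ 4 - 10 * r ^ 2 - 8 * r + 9 = 0 := by
  refine ⟨?_, fun r hr h => quartic_of_three_alphaAngle_add_two_beta' hr.1 h⟩
  obtain ⟨r, hr, h⟩ := intermediate_value_Ioo' zero_le_one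
    (continuousOn_three_alphaAngle_add_two_beta'.mono Set.Icc_subset_Ici_self)
    (show 2 * Real.pi ∈ Set.Ioo (3 * alphaAngle 1 + 2 * beta' 1) (3 * alphaAngle 0 + 2 * beta' 0) by
      rw [three_alphaAngle_zero_add_two_beta', three_alphaAngle_one_add_two_beta']
      constructor <;> linarith [Real.pi_pos])
  refine ⟨r, ⟨hr, h⟩, fun y hy => ?_⟩
  exact strictAntiOn_three_alphaAngle_add_two_beta'.injOn hy.1.1.le hr.1.le (hy.2.trans h.symm)
end

section
/- There exists a unique r ∈ (0,1) with 2·α(r) + 2·β′(r) + π/3 = 2π, and this r satisfies (7+4√3)r⁴ + (20+12√3)r³ + (6+4√3)r² + (−20−4√3)r + 3 = 0 (numerically r = c₂ ≈ 0.5451510421). -/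
open Set in
/-- The angle `α′` is strictly increasing on `[0, ∞)`. -/
theorem strictMonoOn_alpha_prime : StrictMonoOn alpha' (Ici 0) := by
  intro x (hx : 0 ≤ x) y (hy : 0 ≤ y) hxy
  have mem : ∀ z : ℝ, 0 ≤ z → 1 / (1 + z) ∈ Icc (-1 : ℝ) 1 := fun z hz =>
    ⟨by linarith [show 0 ≤ 1 / (1 + z) by positivity],
      (div_le_one (by positivity)).2 (by linarith)⟩
  exact Real.strictAntiOn_arccos (mem y hy) (mem x hx)
    (one_div_lt_one_div_of_lt (by positivity) (by linarith))

open Set in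
/-- The angle `β′` is strictly decreasing on `[0, ∞)`. -/
theorem strictAntiOn_beta_prime : StrictAntiOn beta' (Ici 0) := by
  intro x (hx : 0 ≤ x) y (hy : 0 ≤ y) hxy
  have mem : ∀ z : ℝ, 0 ≤ z → z / (1 + z) ∈ Icc (-1 : ℝ) 1 := fun z hz =>
    ⟨by linarith [show 0 ≤ z / (1 + z) by positivity],
      (div_le_one (by positivity)).2 (by linarith)⟩
  refine Real.strictAntiOn_arccos (mem x hx) (mem y hy) ?_
  rw [div_lt_div_iff₀ (by positivity) (by positivity)]
  linarith

/-- The defining angle equation in reduced form. -/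
theorem angle_sum_eq_iff (r : ℝ) :
    2 * alphaAngle r + 2 * beta' r + Real.pi / 3 = 2 * Real.pi ↔
      2 * alpha' r - beta' r = Real.pi / 6 := by
  unfold alphaAngle
  constructor <;> intro h <;> linarith

theorem strictMonoOn_two_mul_alpha_sub_beta :
    StrictMonoOn (fun r => 2 * alpha' r - beta' r) (Set.Ici 0) := by
  intro x hx y hy hxy
  have h₁ := strictMonoOn_alpha_prime hx hy hxy
  have h₂ := strictAntiOn_beta_prime hx hy hxy
  simp only
  linarith

theorem continuousOn_two_mul_alpha_sub_beta :
    ContinuousOn (fun r => 2 * alpha' r - beta' r) (Set.Ici 0) := by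
  have hne : ∀ x ∈ Set.Ici (0 : ℝ), 1 + x ≠ 0 := fun x (hx : 0 ≤ x) => by positivity
  have hadd : ContinuousOn (fun x : ℝ => 1 + x) (Set.Ici 0) := by fun_prop
  exact (continuousOn_const.mul
    (Real.continuous_arccos.comp_continuousOn (continuousOn_const.div hadd hne))).sub
    (Real.continuous_arccos.comp_continuousOn (continuousOn_id.div hadd hne))

theorem arccos_one_half : Real.arccos (1 / 2) = Real.pi / 3 := by
  rw [← Real.cos_pi_div_three]
  exact Real.arccos_cos (by positivity) (by linarith [Real.pi_pos])

theorem exists_two_mul_alpha_sub_beta_eq :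
    ∃ r ∈ Set.Ioo (0 : ℝ) 1, 2 * alpha' r - beta' r = Real.pi / 6 := by
  have hcont : ContinuousOn (fun r => 2 * alpha' r - beta' r) (Set.Icc 0 1) :=
    continuousOn_two_mul_alpha_sub_beta.mono Set.Icc_subset_Ici_self
  refine intermediate_value_Ioo zero_le_one hcont ⟨?_, ?_⟩
  · simp only [alpha', beta', add_zero, div_one, Real.arccos_one, Real.arccos_zero]
    linarith [Real.pi_pos]
  · simp only [alpha', beta', one_add_one_eq_two, arccos_one_half]
    linarith [Real.pi_pos]

/-- Taking cosines in `β′(r) = 2α′(r) − π/6` and eliminating the sine of `α′(r)`. -/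
theorem quartic_eq_zero_of_two_mul_alpha_sub_beta_eq {r : ℝ} (hr : 0 ≤ r)
    (h : 2 * alpha' r - beta' r = Real.pi / 6) :
    (7 + 4 * Real.sqrt 3) * r ^ 4 + (20 + 12 * Real.sqrt 3) * r ^ 3 +
      (6 + 4 * Real.sqrt 3) * r ^ 2 + (-20 - 4 * Real.sqrt 3) * r + 3 = 0 := by
  have hpos : 0 < 1 + r := by positivity
  have hcosα : Real.cos (alpha' r) = 1 / (1 + r) :=
    Real.cos_arccos (by linarith [show 0 ≤ 1 / (1 + r) by positivity])
      ((div_le_one hpos).2 (by linarith))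
  have hcosβ : Real.cos (beta' r) = r / (1 + r) :=
    Real.cos_arccos (by linarith [show 0 ≤ r / (1 + r) by positivity])
      ((div_le_one hpos).2 (by linarith))
  have hsq := Real.sin_sq_add_cos_sq (alpha' r)
  have hcos : Real.cos (beta' r) = Real.cos (2 * alpha' r - Real.pi / 6) := by
    congr 1
    linarith
  rw [Real.cos_sub, Real.cos_two_mul, Real.sin_two_mul, Real.cos_pi_div_six,
    Real.sin_pi_div_six, hcosα, hcosβ] at hcos
  rw [hcosα] at hsq
  obtain ⟨t, ht⟩ : ∃ t, Real.sin (alpha' r) = t / (1 + r) :=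
    ⟨Real.sin (alpha' r) * (1 + r), by field_simp⟩
  rw [ht] at hcos hsq
  have h3 : Real.sqrt 3 ^ 2 = 3 := Real.sq_sqrt (by norm_num)
  generalize Real.sqrt 3 = s at *
  have ht2 : t ^ 2 = r ^ 2 + 2 * r := by
    field_simp at hsq
    linarith
  have hlin : 2 * t = 2 * r * (1 + r) - s * (1 - 2 * r - r ^ 2) := by
    field_simp at hcos
    linarith
  have hsquare : 4 * t ^ 2 = (2 * r * (1 + r) - s * (1 - 2 * r - r ^ 2)) ^ 2 := by
    rw [← hlin]
    ring
  rw [ht2] at hsquare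
  linear_combination -hsquare - (1 - 2 * r - r ^ 2) ^ 2 * h3

/-- There is a unique `r ∈ (0,1)` with `2α(r) + 2β′(r) + π/3 = 2π`, and it
satisfies `(7+4√3)r⁴ + (20+12√3)r³ + (6+4√3)r² + (−20−4√3)r + 3 = 0`
(this is `c₂ ≈ 0.5451510421`). -/
theorem c2_equation :
    (∃! r : ℝ, r ∈ Set.Ioo (0 : ℝ) 1 ∧
      2 * alphaAngle r + 2 * beta' r + Real.pi / 3 = 2 * Real.pi) ∧
    ∀ r ∈ Set.Ioo (0 : ℝ) 1,
      2 * alphaAngle r + 2 * beta' r + Real.pi / 3 = 2 * Real.pi →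
      (7 + 4 * Real.sqrt 3) * r ^ 4 + (20 + 12 * Real.sqrt 3) * r ^ 3 +
        (6 + 4 * Real.sqrt 3) * r ^ 2 + (-20 - 4 * Real.sqrt 3) * r + 3 = 0 := by
  obtain ⟨r, hr, hroot⟩ := exists_two_mul_alpha_sub_beta_eq
  refine ⟨⟨r, ⟨hr, (angle_sum_eq_iff r).2 hroot⟩, ?_⟩, fun x hx h => ?_⟩
  · rintro x ⟨hx, h⟩
    exact strictMonoOn_two_mul_alpha_sub_beta.injOn hx.1.le hr.1.le
      (((angle_sum_eq_iff x).1 h).trans hroot.symm)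
  · exact quartic_eq_zero_of_two_mul_alpha_sub_beta_eq hx.1.le ((angle_sum_eq_iff x).1 h)
end

section
/- There exists a unique r ∈ (0,1) with α(r) + 4·β′(r) = 2π, and this r satisfies 8r³ + 3r² − 2r − 1 = 0 (numerically r = c₃ ≈ 0.5332964167). -/
/-- On `(0,1)`, the angle equation `α(r) + 4β′(r) = 2π` is equivalent to a cubic equation. -/
theorem alphaAngle_add_four_mul_beta'_eq_iff {r : ℝ} (h0 : 0 < r) (h1 : r < 1) :
    alphaAngle r + 4 * beta' r = 2 * Real.pi ↔ 8 * r ^ 3 + 3 * r ^ 2 - 2 * r - 1 = 0 := by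
  have hr : 0 < 1 + r := by linarith
  have hβ0 : 0 ≤ beta' r := Real.arccos_nonneg _
  have hβ : beta' r ≤ Real.pi / 2 := Real.arccos_le_pi_div_two.2 (by positivity)
  have hα0 : 0 ≤ alpha' r := Real.arccos_nonneg _
  have hα : alpha' r ≤ Real.pi / 2 := Real.arccos_le_pi_div_two.2 (by positivity)
  have hcosβ : Real.cos (beta' r) = r / (1 + r) :=
    Real.cos_arccos (by linarith [show 0 ≤ r / (1 + r) by positivity])
      ((div_le_one hr).2 (by linarith))
  have hcosα : Real.cos (alpha' r) = 1 / (1 + r) :=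
    Real.cos_arccos (by linarith [show 0 ≤ 1 / (1 + r) by positivity])
      ((div_le_one hr).2 (by linarith))
  have hsin0 : 0 ≤ Real.sin (alpha' r) :=
    Real.sin_nonneg_of_nonneg_of_le_pi hα0 (by linarith)
  have hangle : alphaAngle r + 4 * beta' r = 2 * Real.pi ↔
      2 * beta' r = alpha' r + Real.pi / 2 := by
    unfold alphaAngle
    constructor <;> intro h <;> linarith
  have hcos : 2 * beta' r = alpha' r + Real.pi / 2 ↔
      Real.cos (2 * beta' r) = Real.cos (alpha' r + Real.pi / 2) :=
    (Real.injOn_cos.eq_iff ⟨by linarith, by linarith⟩ ⟨by linarith, by linarith⟩).symm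
  have hpos : 0 ≤ 1 - 2 * (r / (1 + r)) ^ 2 := by
    rw [div_pow, ← mul_div_assoc, sub_nonneg, div_le_one (by positivity)]
    nlinarith
  have hsin : Real.cos (2 * beta' r) = Real.cos (alpha' r + Real.pi / 2) ↔
      Real.sin (alpha' r) = 1 - 2 * (r / (1 + r)) ^ 2 := by
    rw [Real.cos_two_mul, Real.cos_add_pi_div_two, hcosβ]
    constructor <;> intro h <;> linarith
  rw [hangle, hcos, hsin, ← sq_eq_sq₀ hsin0 hpos, Real.sin_sq, hcosα, ← sub_eq_zero]
  have hdiff : 1 - (1 / (1 + r)) ^ 2 - (1 - 2 * (r / (1 + r)) ^ 2) ^ 2 =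
      (8 * r ^ 3 + 3 * r ^ 2 - 2 * r - 1) / (1 + r) ^ 4 := by
    field_simp
    ring
  rw [hdiff, div_eq_zero_iff, or_iff_left (by positivity)]

/-- The cubic `8r³ + 3r² − 2r − 1` has at most one positive root. -/
theorem eq_of_pos_of_cubic_eq_zero {r s : ℝ} (hr : 0 < r) (hs : 0 < s)
    (hr' : 8 * r ^ 3 + 3 * r ^ 2 - 2 * r - 1 = 0)
    (hs' : 8 * s ^ 3 + 3 * s ^ 2 - 2 * s - 1 = 0) : r = s := by
  have hquad : 0 < 8 * r ^ 2 + 3 * r - 2 := by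
    refine pos_of_mul_pos_right (a := r) ?_ hr.le
    linarith
  have hfactor : (r - s) * (8 * r ^ 2 + 3 * r - 2 + (8 * r * s + 8 * s ^ 2 + 3 * s)) = 0 := by
    linear_combination hr' - hs'
  rcases mul_eq_zero.1 hfactor with h | h
  · exact sub_eq_zero.1 h
  · have : 0 < 8 * r * s + 8 * s ^ 2 + 3 * s := by positivity
    linarith

/-- There is a unique `r ∈ (0,1)` with `α(r) + 4β′(r) = 2π`, and it satisfies
`8r³ + 3r² − 2r − 1 = 0` (this is `c₃ ≈ 0.5332964167`). -/
theorem c3_equation :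
    (∃! r : ℝ, r ∈ Set.Ioo (0 : ℝ) 1 ∧
      alphaAngle r + 4 * beta' r = 2 * Real.pi) ∧
    ∀ r ∈ Set.Ioo (0 : ℝ) 1, alphaAngle r + 4 * beta' r = 2 * Real.pi →
      8 * r ^ 3 + 3 * r ^ 2 - 2 * r - 1 = 0 := by
  refine ⟨?_, fun r hr h => (alphaAngle_add_four_mul_beta'_eq_iff hr.1 hr.2).1 h⟩
  have hcont : ContinuousOn (fun r : ℝ => 8 * r ^ 3 + 3 * r ^ 2 - 2 * r - 1) (Set.Icc 0 1) := by
    fun_prop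
  obtain ⟨r, hr, hr'⟩ := intermediate_value_Ioo zero_le_one hcont
    (show (0 : ℝ) ∈ Set.Ioo _ _ by constructor <;> norm_num)
  refine ⟨r, ⟨hr, (alphaAngle_add_four_mul_beta'_eq_iff hr.1 hr.2).2 hr'⟩, ?_⟩
  rintro s ⟨hs, hs'⟩
  exact eq_of_pos_of_cubic_eq_zero hs.1 hr.1
    ((alphaAngle_add_four_mul_beta'_eq_iff hs.1 hs.2).1 hs') hr'
end

section
/- The value r = (2√3 + 1 − 2√(1+√3))/3 lies in (0,1) and satisfies α(r) + 2·β′(r) + 2·π/3 = 2π, and it is the unique r ∈ (0,1) with this property. -/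
theorem cos_beta'_sub_alpha' {r : ℝ} (hr : 0 < r) :
    Real.cos (beta' r - alpha' r) =
      (r + √((r ^ 2 + 2 * r) * (1 + 2 * r))) / (1 + r) ^ 2 := by
  have h1r : 0 < 1 + r := by linarith
  have hα : 1 - (1 / (1 + r)) ^ 2 = (r ^ 2 + 2 * r) / (1 + r) ^ 2 := by
    field_simp
    ring
  have hβ : 1 - (r / (1 + r)) ^ 2 = (1 + 2 * r) / (1 + r) ^ 2 := by
    field_simp
    ring
  have hα1 : 1 / (1 + r) ≤ 1 := by rw [div_le_one h1r]; linarith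
  have hβ1 : r / (1 + r) ≤ 1 := by rw [div_le_one h1r]; linarith
  have hα0 : 0 < 1 / (1 + r) := by positivity
  have hβ0 : 0 < r / (1 + r) := by positivity
  rw [Real.cos_sub, beta', alpha', Real.cos_arccos (by linarith) hβ1,
    Real.cos_arccos (by linarith) hα1, Real.sin_arccos, Real.sin_arccos, hα, hβ,
    Real.sqrt_div (by positivity), Real.sqrt_div (by positivity), Real.sqrt_sq h1r.le,
    Real.sqrt_mul (by positivity)]
  field_simp

/-- The angle equation is equivalent to `β′(r) − α′(r) = π/6`, and taking cosines turns it into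
a quadratic equation. -/
theorem alphaAngle_add_two_mul_beta'_eq_iff {r : ℝ} (hr : 0 < r) (hr1 : r ≤ 1) :
    alphaAngle r + 2 * beta' r + 2 * (Real.pi / 3) = 2 * Real.pi ↔
      3 * (1 + r) ^ 2 = 4 * (2 + √3) * r := by
  have h1r : 0 < 1 + r := by linarith
  have h3 : √3 ^ 2 = 3 := Real.sq_sqrt (by norm_num)
  have h31 : 1 ≤ √3 := Real.one_le_sqrt.2 (by norm_num)
  have hle : alpha' r ≤ beta' r :=
    Real.arccos_le_arccos (div_le_div_of_nonneg_right hr1 h1r.le)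
  have hα : 0 ≤ alpha' r := Real.arccos_nonneg _
  have hβ : beta' r ≤ Real.pi := Real.arccos_le_pi _
  have hpi := Real.pi_pos
  have hnn : 0 ≤ √3 / 2 * (1 + r) ^ 2 - r := by
    nlinarith [mul_nonneg (sub_nonneg.2 h31) (sq_nonneg (1 + r)), sq_nonneg r]
  calc alphaAngle r + 2 * beta' r + 2 * (Real.pi / 3) = 2 * Real.pi
      ↔ beta' r - alpha' r = Real.pi / 6 := by
        unfold alphaAngle
        constructor <;> intro h <;> linarith
    _ ↔ Real.cos (beta' r - alpha' r) = Real.cos (Real.pi / 6) :=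
        (Real.injOn_cos.eq_iff ⟨by linarith, by linarith⟩ ⟨by linarith, by linarith⟩).symm
    _ ↔ √((r ^ 2 + 2 * r) * (1 + 2 * r)) = √3 / 2 * (1 + r) ^ 2 - r := by
        rw [cos_beta'_sub_alpha' hr, Real.cos_pi_div_six, div_eq_iff (by positivity),
          eq_sub_iff_add_eq']
    _ ↔ (r ^ 2 + 2 * r) * (1 + 2 * r) = (√3 / 2 * (1 + r) ^ 2 - r) ^ 2 := by
        rw [Real.sqrt_eq_iff_eq_sq (by positivity) hnn]
    _ ↔ 3 * (1 + r) ^ 2 = 4 * (2 + √3) * r := by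
        have key : (√3 / 2 * (1 + r) ^ 2 - r) ^ 2 - (r ^ 2 + 2 * r) * (1 + 2 * r) =
            (1 + r) ^ 2 / 4 * (3 * (1 + r) ^ 2 - 4 * (2 + √3) * r) := by
          linear_combination (1 + r) ^ 4 / 4 * h3
        rw [eq_comm, ← sub_eq_zero, key, mul_eq_zero_iff_left (by positivity), sub_eq_zero]

/-- `r = (2√3 + 1 − 2√(1+√3))/3` lies in `(0,1)`, satisfies
`α(r) + 2β′(r) + 2π/3 = 2π`, and is the unique `r ∈ (0,1)` with this
property. -/
theorem c5_equation :
    (2 * Real.sqrt 3 + 1 - 2 * Real.sqrt (1 + Real.sqrt 3)) / 3 ∈ Set.Ioo (0 : ℝ) 1 ∧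
    alphaAngle ((2 * Real.sqrt 3 + 1 - 2 * Real.sqrt (1 + Real.sqrt 3)) / 3) +
      2 * beta' ((2 * Real.sqrt 3 + 1 - 2 * Real.sqrt (1 + Real.sqrt 3)) / 3) +
      2 * (Real.pi / 3) = 2 * Real.pi ∧
    ∀ r ∈ Set.Ioo (0 : ℝ) 1,
      alphaAngle r + 2 * beta' r + 2 * (Real.pi / 3) = 2 * Real.pi →
      r = (2 * Real.sqrt 3 + 1 - 2 * Real.sqrt (1 + Real.sqrt 3)) / 3 := by
  have h3 : √3 ^ 2 = 3 := Real.sq_sqrt (by norm_num)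
  have hs : √(1 + √3) ^ 2 = 1 + √3 := Real.sq_sqrt (by positivity)
  have h3l : 1.7 < √3 := Real.lt_sqrt_of_sq_lt (by norm_num)
  have h3u : √3 < 1.8 := (Real.sqrt_lt' (by norm_num)).2 (by norm_num)
  have hsl : 1.6 < √(1 + √3) := Real.lt_sqrt_of_sq_lt (by linarith)
  have hsu : √(1 + √3) < 1.7 := (Real.sqrt_lt' (by norm_num)).2 (by linarith)
  have h0 : 0 < (2 * √3 + 1 - 2 * √(1 + √3)) / 3 := by linarith
  have h1 : (2 * √3 + 1 - 2 * √(1 + √3)) / 3 < 1 := by linarith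
  refine ⟨⟨h0, h1⟩, (alphaAngle_add_two_mul_beta'_eq_iff h0 h1.le).2 ?_, ?_⟩
  · linear_combination 4 / 3 * hs - 4 / 3 * h3
  · rintro r ⟨hr0, hr1⟩ h
    rw [alphaAngle_add_two_mul_beta'_eq_iff hr0 hr1.le] at h
    have hfac : (r - (2 * √3 + 1 + 2 * √(1 + √3)) / 3) *
        (r - (2 * √3 + 1 - 2 * √(1 + √3)) / 3) = 0 := by
      linear_combination 1 / 3 * h - 4 / 9 * hs + 4 / 9 * h3
    rcases mul_eq_zero.1 hfac with h | h <;> linarith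
end

section
/- The value r = sin(π/12)/(1 − sin(π/12)) lies in (0,1) and satisfies 4·β′(r) + π/3 = 2π (equivalently β′(r) = 5π/12), and it is the unique r ∈ (0,1) with this property. -/
/-- The cosine of `5π/12` is the sine of its complement `π/12`. -/
theorem cos_five_pi_div_twelve :
    Real.cos (5 * Real.pi / 12) = Real.sin (Real.pi / 12) := by
  rw [← Real.cos_pi_div_two_sub]
  congr 1
  ring

theorem sin_pi_div_twelve_pos : 0 < Real.sin (Real.pi / 12) :=
  Real.sin_pos_of_pos_of_lt_pi (by positivity) (by linarith [Real.pi_pos])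

theorem sin_pi_div_twelve_lt_half : Real.sin (Real.pi / 12) < 1 / 2 := by
  rw [← Real.sin_pi_div_six]
  apply Real.sin_lt_sin_of_lt_of_le_pi_div_two <;> linarith [Real.pi_pos]

/-- The map `s ↦ s / (1 - s)` is a right inverse of `r ↦ r / (1 + r)`, so `beta'` becomes
`arccos` in the variable `s`. -/
theorem beta'_div_one_sub {s : ℝ} (hs : s ≠ 1) : beta' (s / (1 - s)) = Real.arccos s := by
  have h : 1 - s ≠ 0 := sub_ne_zero.mpr hs.symm
  have h' : 1 + s / (1 - s) = 1 / (1 - s) := by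
    field_simp
    ring
  rw [beta', h']
  congr 1
  field_simp

theorem cos_beta' {r : ℝ} (hr : 0 ≤ r) : Real.cos (beta' r) = r / (1 + r) := by
  have h : 0 ≤ r / (1 + r) := by positivity
  refine Real.cos_arccos (by linarith) ?_
  rw [div_le_one (by linarith)]
  linarith

/-- `r = sin(π/12)/(1 − sin(π/12))` lies in `(0,1)`, satisfies
`4β′(r) + π/3 = 2π` (equivalently `β′(r) = 5π/12`), and is the unique
`r ∈ (0,1)` with this property. -/
theorem c6_equation :
    Real.sin (Real.pi / 12) / (1 - Real.sin (Real.pi / 12)) ∈ Set.Ioo (0 : ℝ) 1 ∧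
    4 * beta' (Real.sin (Real.pi / 12) / (1 - Real.sin (Real.pi / 12))) +
      Real.pi / 3 = 2 * Real.pi ∧
    beta' (Real.sin (Real.pi / 12) / (1 - Real.sin (Real.pi / 12))) =
      5 * Real.pi / 12 ∧
    ∀ r ∈ Set.Ioo (0 : ℝ) 1, 4 * beta' r + Real.pi / 3 = 2 * Real.pi →
      r = Real.sin (Real.pi / 12) / (1 - Real.sin (Real.pi / 12)) := by
  have hpos := sin_pi_div_twelve_pos
  have hlt := sin_pi_div_twelve_lt_half
  have hbeta : beta' (Real.sin (Real.pi / 12) / (1 - Real.sin (Real.pi / 12))) =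
      5 * Real.pi / 12 := by
    rw [beta'_div_one_sub (by linarith), ← cos_five_pi_div_twelve]
    apply Real.arccos_cos <;> linarith [Real.pi_pos]
  refine ⟨⟨div_pos hpos (by linarith), ?_⟩, ?_, hbeta, fun r hr hangle => ?_⟩
  · rw [div_lt_one (by linarith)]
    linarith
  · rw [hbeta]
    ring
  · have hcos := cos_beta' hr.1.le
    rw [show beta' r = 5 * Real.pi / 12 by linarith, cos_five_pi_div_twelve,
      eq_div_iff (by linarith [hr.1])] at hcos
    rw [eq_div_iff (by linarith)]
    linarith
end

section
/- The value r = (√17 − 3)/4 lies in (0,1) and satisfies 2·α(r) + 2·β′(r) = 2π, and it is the unique r ∈ (0,1) with this property. -/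
/-- For `0 < r`, the equation `2α(r) + 2β′(r) = 2π` says that `β′(r) = 2α′(r)`, which is the
polynomial equation `2r² + 3r - 1 = 0`. -/
theorem two_alphaAngle_add_two_beta'_eq_iff {r : ℝ} (hr : 0 < r) :
    2 * alphaAngle r + 2 * beta' r = 2 * Real.pi ↔ 2 * r ^ 2 + 3 * r - 1 = 0 := by
  have hα_mem : 2 * alpha' r ∈ Set.Icc 0 Real.pi := by
    have hα_nonneg : 0 ≤ alpha' r := Real.arccos_nonneg _
    have hα_le : alpha' r ≤ Real.pi / 2 := Real.arccos_le_pi_div_two.2 (by positivity)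
    constructor <;> linarith
  have hβ_mem : beta' r ∈ Set.Icc 0 Real.pi :=
    ⟨Real.arccos_nonneg _, Real.arccos_le_pi _⟩
  have hcosα : Real.cos (alpha' r) = 1 / (1 + r) :=
    Real.cos_arccos (by linarith [show 0 ≤ 1 / (1 + r) by positivity])
      (by rw [div_le_one (by positivity)]; linarith)
  have hcosβ : Real.cos (beta' r) = r / (1 + r) :=
    Real.cos_arccos (by linarith [show 0 ≤ r / (1 + r) by positivity])
      (by rw [div_le_one (by positivity)]; linarith)
  have hne : 1 + r ≠ 0 := by positivity
  calc 2 * alphaAngle r + 2 * beta' r = 2 * Real.pi ↔ beta' r = 2 * alpha' r := by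
        unfold alphaAngle
        constructor <;> intro h <;> linarith
    _ ↔ r / (1 + r) = 2 * (1 / (1 + r)) ^ 2 - 1 := by
        rw [← Real.injOn_cos.eq_iff hβ_mem hα_mem, Real.cos_two_mul, hcosα, hcosβ]
    _ ↔ 2 * r ^ 2 + 3 * r - 1 = 0 := by
        field_simp
        constructor <;> intro h <;> linarith

/-- `r = (√17 − 3)/4` lies in `(0,1)`, satisfies `2α(r) + 2β′(r) = 2π`, and is
the unique `r ∈ (0,1)` with this property. -/
theorem c7_equation :
    (Real.sqrt 17 - 3) / 4 ∈ Set.Ioo (0 : ℝ) 1 ∧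
    2 * alphaAngle ((Real.sqrt 17 - 3) / 4) +
      2 * beta' ((Real.sqrt 17 - 3) / 4) = 2 * Real.pi ∧
    ∀ r ∈ Set.Ioo (0 : ℝ) 1, 2 * alphaAngle r + 2 * beta' r = 2 * Real.pi →
      r = (Real.sqrt 17 - 3) / 4 := by
  have hsq : Real.sqrt 17 ^ 2 = 17 := Real.sq_sqrt (by norm_num)
  have hlo : 3 < Real.sqrt 17 := Real.lt_sqrt_of_sq_lt (by norm_num)
  have hhi : Real.sqrt 17 < 7 := (Real.sqrt_lt' (by norm_num)).2 (by norm_num)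
  have hpos : 0 < (Real.sqrt 17 - 3) / 4 := by linarith
  refine ⟨⟨hpos, by linarith⟩, ?_, fun r hr h => ?_⟩
  · rw [two_alphaAngle_add_two_beta'_eq_iff hpos]
    linear_combination hsq / 8
  · rw [two_alphaAngle_add_two_beta'_eq_iff hr.1] at h
    have hfac : (r - (Real.sqrt 17 - 3) / 4) * (r + (Real.sqrt 17 + 3) / 4) = 0 := by
      linear_combination h / 2 - hsq / 16
    have hne : r + (Real.sqrt 17 + 3) / 4 ≠ 0 := ne_of_gt (by linarith [hr.1])
    exact sub_eq_zero.1 ((mul_eq_zero.1 hfac).resolve_right hne)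
end

section
/- The value r = 5 − 2√6 lies in (0,1) and satisfies α(r) + 2·β′(r) + π/3 = 2π, and it is the unique r ∈ (0,1) with this property. -/
/-- `β′ − α′` is strictly decreasing on the positive reals. -/
theorem strictAntiOn_beta'_sub_alpha' :
    StrictAntiOn (fun r => beta' r - alpha' r) (Set.Ioi 0) := by
  intro r hr s hs hrs
  simp only [Set.mem_Ioi] at hr hs
  have hα : alpha' r < alpha' s := by
    apply Real.strictAntiOn_arccos
    · exact ⟨by linarith [show 0 < 1 / (1 + s) by positivity],
        (div_le_one (by positivity)).2 (by linarith)⟩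
    · exact ⟨by linarith [show 0 < 1 / (1 + r) by positivity],
        (div_le_one (by positivity)).2 (by linarith)⟩
    · exact one_div_lt_one_div_of_lt (by positivity) (by linarith)
  have hβ : beta' s < beta' r := by
    apply Real.strictAntiOn_arccos
    · exact ⟨by linarith [show 0 < r / (1 + r) by positivity],
        (div_le_one (by positivity)).2 (by linarith)⟩
    · exact ⟨by linarith [show 0 < s / (1 + s) by positivity],
        (div_le_one (by positivity)).2 (by linarith)⟩
    · rw [div_lt_div_iff₀ (by positivity) (by positivity)]
      linarith
  show beta' s - alpha' s < beta' r - alpha' r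
  linarith

/-- For `r ∈ (0,1)` a root of `r² − 10r + 1`, the angles satisfy `β′(r) − α′(r) = π/3`. -/
theorem beta'_sub_alpha'_eq_pi_div_three {r : ℝ} (h₀ : 0 < r) (h₁ : r < 1)
    (h : r ^ 2 - 10 * r + 1 = 0) : beta' r - alpha' r = Real.pi / 3 := by
  have hle : alpha' r ≤ beta' r :=
    Real.antitone_arccos (div_le_div_of_nonneg_right h₁.le (by positivity))
  have hsin : √(1 - (r / (1 + r)) ^ 2) * √(1 - (1 / (1 + r)) ^ 2) = 5 * r / (1 + r) ^ 2 := by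
    have hnonneg : 0 ≤ 1 - (r / (1 + r)) ^ 2 := by
      rw [div_pow, sub_nonneg, div_le_one (by positivity)]
      nlinarith
    rw [← Real.sqrt_mul hnonneg, Real.sqrt_eq_iff_mul_self_eq_of_pos (by positivity)]
    field_simp
    linear_combination (-2 * r) * h
  have hcos : Real.cos (beta' r - alpha' r) = Real.cos (Real.pi / 3) := by
    have hα : Real.cos (alpha' r) = 1 / (1 + r) :=
      Real.cos_arccos (by linarith [show 0 < 1 / (1 + r) by positivity])
        ((div_le_one (by positivity)).2 (by linarith))
    have hβ : Real.cos (beta' r) = r / (1 + r) :=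
      Real.cos_arccos (by linarith [show 0 < r / (1 + r) by positivity])
        ((div_le_one (by positivity)).2 (by linarith))
    rw [Real.cos_sub, hα, hβ, Real.cos_pi_div_three, beta', alpha', Real.sin_arccos,
      Real.sin_arccos, hsin]
    field_simp
    linear_combination -h
  refine Real.injOn_cos ⟨sub_nonneg.2 hle, ?_⟩ ⟨by positivity, by linarith [Real.pi_pos]⟩ hcos
  have hβ : beta' r ≤ Real.pi := Real.arccos_le_pi _
  have hα : 0 ≤ alpha' r := Real.arccos_nonneg _
  linarith

/-- `r = 5 − 2√6` lies in `(0,1)`, satisfies `α(r) + 2β′(r) + π/3 = 2π`, and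
is the unique `r ∈ (0,1)` with this property. -/
theorem c9_equation :
    5 - 2 * Real.sqrt 6 ∈ Set.Ioo (0 : ℝ) 1 ∧
    alphaAngle (5 - 2 * Real.sqrt 6) + 2 * beta' (5 - 2 * Real.sqrt 6) +
      Real.pi / 3 = 2 * Real.pi ∧
    ∀ r ∈ Set.Ioo (0 : ℝ) 1,
      alphaAngle r + 2 * beta' r + Real.pi / 3 = 2 * Real.pi →
      r = 5 - 2 * Real.sqrt 6 := by
  have hsq : √6 ^ 2 = 6 := Real.sq_sqrt (by norm_num)
  have hlt : √6 < 5 / 2 := by rw [Real.sqrt_lt' (by norm_num)]; norm_num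
  have hgt : 2 < √6 := by rw [Real.lt_sqrt (by norm_num)]; norm_num
  have h₀ : 0 < 5 - 2 * √6 := by linarith
  have h₁ : 5 - 2 * √6 < 1 := by linarith
  have heq := beta'_sub_alpha'_eq_pi_div_three h₀ h₁ (by linear_combination 4 * hsq)
  refine ⟨⟨h₀, h₁⟩, ?_, fun r hr h => ?_⟩
  · rw [alphaAngle]
    linarith
  · refine strictAntiOn_beta'_sub_alpha'.injOn hr.1 h₀ ?_
    rw [alphaAngle] at h
    show beta' r - alpha' r = beta' _ - alpha' _
    linarith
end
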